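/- If U is a perfect dominating set of a (q+1)-regular graph G of girth 8 such that the graph G − U is q-regular, then G − U is a q-regular graph of girth at least 8. In particular, removing the perfect dominating set B of Theorem 3(ii) from Γ_q yields a q-regular graph of girth 8 on 2q(q^2 − 2) vertices. -/

import Mathlib

/-- One side of the bipartition of `Γ_q`: ordinary vertices `(a,b,c)` with
`a ∈ F ∪ {q}` (encoded as `Option F`, `none` being the extra symbol `q`) and
`b, c ∈ F`, together with the special vertices `(q,q,a)` with `a ∈ F ∪ {q}`. -/
abbrev SGam (F : Type*) := (Option F × F × F) ⊕ Option F

/-- The incidence relation of `Γ_q`: `lineAdj l p` says the line `l ∈ V₁` is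
incident with the point `p ∈ V₀`, following the explicit formula of Definition 1. -/
def lineAdj {F : Type*} [Field F] : SGam F → SGam F → Prop
  | Sum.inl (some a, b, c), Sum.inl (some x, y, z) =>
      y = a * x + b ∧ z = a ^ 2 * x + 2 * a * b + c
  | Sum.inl (some a, _, c), Sum.inl (none, y, z) => y = a ∧ z = c
  | Sum.inl (none, b, c), Sum.inl (some x, y, _) => x = c ∧ y = b
  | Sum.inl (none, _, c), Sum.inr (some z) => z = c
  | Sum.inr (some a), Sum.inl (none, y, _) => y = a
  | Sum.inr (some _), Sum.inr none => True
  | Sum.inr none, Sum.inr _ => True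
  | _, _ => False

/-- The bipartite graph `Γ_q`: `Sum.inl` is the point side `V₀`, `Sum.inr` is the
line side `V₁`, and a point is adjacent to a line iff they are incident. -/
def GammaQ (F : Type*) [Field F] : SimpleGraph (SGam F ⊕ SGam F) :=
  SimpleGraph.fromRel (fun u v =>
    match u, v with
    | Sum.inl p, Sum.inr l => lineAdj l p
    | _, _ => False)

/-- The point `(a,b,c)₀`, `a ∈ F ∪ {q}`. -/
def pt {F : Type*} (a : Option F) (b c : F) : SGam F ⊕ SGam F := Sum.inl (Sum.inl (a, b, c))
/-- The point `(q,q,a)₀`, `a ∈ F ∪ {q}`. -/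
def ptq {F : Type*} (a : Option F) : SGam F ⊕ SGam F := Sum.inl (Sum.inr a)
/-- The line `(a,b,c)₁`, `a ∈ F ∪ {q}`. -/
def ln {F : Type*} (a : Option F) (b c : F) : SGam F ⊕ SGam F := Sum.inr (Sum.inl (a, b, c))
/-- The line `(q,q,a)₁`, `a ∈ F ∪ {q}`. -/
def lnq {F : Type*} (a : Option F) : SGam F ⊕ SGam F := Sum.inr (Sum.inr a)

/-- The set of vertices at distance at most `n` from `v` (the closed ball `Nⁿ[v]`,
defined via walks). -/
def ball {V : Type*} (G : SimpleGraph V) (v : V) (n : ℕ) : Set V :=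
  {x | ∃ p : G.Walk v x, p.length ≤ n}

/-- The perfect dominating set `B` of Theorem 3(ii):
`B = ⋃_{c∈F} N[(q,0,c)₁] ∪ N[(q,q,0)₁] ∪ (⋂_{c∈F} N²[(q,0,c)₁] ∩ N²[(q,q,0)₁]) ∪ N²[(q,q,ξ)₁]`. -/
def Bset (F : Type*) [Field F] (ξ : F) : Set (SGam F ⊕ SGam F) :=
  (⋃ c : F, ball (GammaQ F) (ln none 0 c) 1) ∪ ball (GammaQ F) (lnq (some 0)) 1 ∪
    ((⋂ c : F, ball (GammaQ F) (ln none 0 c) 2) ∩ ball (GammaQ F) (lnq (some 0)) 2) ∪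
    ball (GammaQ F) (lnq (some ξ)) 2

/-!
Away from the vertices at infinity, `Γ_q` is the incidence graph of the points of affine 3-space
over `F` and the affine lines whose direction lies on the conic `{(1, a, a²)} ∪ {(0, 0, 1)}`: the
line `(a, b, c)₁` is `x ↦ (x, ax + b, a²x + 2ab + c)`, and `(q, b, c)₁` is the vertical line
`x = c, y = b`. The point `(q, a, c)₀` is the plane `z - 2ay + a²x = c`, tangent to the conic at
`(1, a, a²)`, `(q, q, c)₀` is the plane `x = c`, tangent at `(0, 0, 1)`, and the lines
`(q, q, a)₁` are the points of the conic. Since no three directions on the conic are coplanar and a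
tangent plane contains only one of them, there are neither digons nor triangles of lines, so `Γ_q`
has girth at least 8.

Every vertex outside `B` has exactly one neighbour in `B`, so removing `B` lowers all degrees by
one and cannot create short cycles. The octagon formed by two lines of each of two parallel classes
in an affine plane survives, so the girth stays 8.
-/

section Girth

variable {V : Type*} {G : SimpleGraph V}

theorem egirth_le_egirth_induce (G : SimpleGraph V) (s : Set V) :
    G.egirth ≤ (G.induce s).egirth :=
  SimpleGraph.IsContained.egirth_le ⟨(SimpleGraph.Embedding.induce s).toCopy⟩

theorem eight_le_egirth_of_isBipartite (hG : G.IsBipartite)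
    (h₄ : (SimpleGraph.cycleGraph 4).Free G) (h₆ : (SimpleGraph.cycleGraph 6).Free G) :
    8 ≤ G.egirth := by
  refine SimpleGraph.le_egirth.2 fun v w hw => ?_
  have hthree : 3 ≤ w.length := hw.three_le_length
  have heven : Even w.length := SimpleGraph.two_colorable_iff_forall_loop_even.1 hG v w
  have hne₄ : w.length ≠ 4 := fun h =>
    h₄ ((SimpleGraph.cycleGraph_isContained_iff (by norm_num)).2 ⟨v, w, hw, h⟩)
  have hne₆ : w.length ≠ 6 := fun h =>
    h₆ ((SimpleGraph.cycleGraph_isContained_iff (by norm_num)).2 ⟨v, w, hw, h⟩)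
  have hlength : 8 ≤ w.length := by grind
  exact_mod_cast hlength

end Girth

section PerfectDomination

variable {V : Type*} {G : SimpleGraph V} {U : Set V}

/-- `U` is a perfect dominating set of `G`: every vertex outside `U` has exactly one neighbour
in `U`. -/
def IsPerfectDominatingSet (G : SimpleGraph V) (U : Set V) : Prop :=
  ∀ v ∉ U, (G.neighborSet v ∩ U).encard = 1

theorem encard_neighborSet_induce (G : SimpleGraph V) (s : Set V) (v : s) :
    ((G.induce s).neighborSet v).encard = (G.neighborSet v ∩ s).encard := by
  rw [← Subtype.val_injective.encard_image]
  congr 1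
  ext w
  simp [and_comm]

theorem IsPerfectDominatingSet.encard_neighborSet_induce_compl_add_one
    (hU : IsPerfectDominatingSet G U) (v : ↥Uᶜ) :
    ((G.induce Uᶜ).neighborSet v).encard + 1 = (G.neighborSet v).encard := by
  rw [encard_neighborSet_induce, ← hU v v.2, ← Set.sdiff_eq, Set.encard_sdiff_add_encard_inter]

end PerfectDomination

section Ball

variable {V : Type*} {G : SimpleGraph V} {v x : V}

theorem mem_ball_zero : x ∈ ball G v 0 ↔ x = v := by
  constructor
  · rintro ⟨_ | ⟨h, p⟩, hp⟩
    · rfl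
    · simp at hp
  · rintro rfl
    exact ⟨.nil, le_rfl⟩

theorem mem_ball_succ {n : ℕ} :
    x ∈ ball G v (n + 1) ↔ x = v ∨ ∃ w, G.Adj v w ∧ x ∈ ball G w n := by
  constructor
  · rintro ⟨_ | ⟨h, p⟩, hp⟩
    · exact .inl rfl
    · exact .inr ⟨_, h, p, by simpa using hp⟩
  · rintro (rfl | ⟨w, h, p, hp⟩)
    · exact ⟨.nil, by simp⟩
    · exact ⟨.cons h p, by simpa using hp⟩

theorem mem_ball_one : x ∈ ball G v 1 ↔ x = v ∨ G.Adj v x := by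
  simp [mem_ball_succ (n := 0), mem_ball_zero]

theorem mem_ball_two : x ∈ ball G v 2 ↔ x = v ∨ G.Adj v x ∨ ∃ w, G.Adj v w ∧ G.Adj w x := by
  simp [mem_ball_succ (n := 1), mem_ball_one, and_or_left, exists_or]

end Ball

section Conic

variable {F : Type*} [Field F] {a₁ a₂ a₃ b₁ b₂ b₃ c₁ c₂ c₃ x₁ x₂ x₃ y₁ y₂ y₃ z₁ z₂ z₃ : F}

/-- The linear form on affine 3-space vanishing on the directions `(1, s, s²)` and `(1, t, t²)`
(to second order if `s = t`); its level sets are the planes meeting the conic of directions in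
these two points. -/
def secantForm (s t x y z : F) : F := z - (s + t) * y + s * t * x

theorem secantForm_sub_secantForm (s t : F)
    (h₁ : lineAdj (.inl (some a₁, b₁, c₁)) (.inl (some x₁, y₁, z₁)))
    (h₂ : lineAdj (.inl (some a₁, b₁, c₁)) (.inl (some x₂, y₂, z₂))) :
    secantForm s t x₁ y₁ z₁ - secantForm s t x₂ y₂ z₂ = (a₁ - s) * (a₁ - t) * (x₁ - x₂) := by
  simp only [lineAdj] at h₁ h₂
  simp only [secantForm]
  grind

theorem secantForm_self (h : lineAdj (.inl (some a₁, b₁, c₁)) (.inl (some x₁, y₁, z₁))) :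
    secantForm a₁ a₁ x₁ y₁ z₁ = c₁ := by
  simp only [lineAdj] at h
  simp only [secantForm]
  grind

theorem eq_or_eq_of_secantForm_eq {s t : F}
    (h₁ : lineAdj (.inl (some a₁, b₁, c₁)) (.inl (some x₁, y₁, z₁)))
    (h₂ : lineAdj (.inl (some a₁, b₁, c₁)) (.inl (some x₂, y₂, z₂)))
    (hform : secantForm s t x₁ y₁ z₁ = secantForm s t x₂ y₂ z₂) :
    a₁ = s ∨ a₁ = t ∨ x₁ = x₂ := by
  have hprod := secantForm_sub_secantForm s t h₁ h₂
  rw [hform, sub_self, eq_comm, mul_eq_zero, mul_eq_zero] at hprod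
  simpa only [sub_eq_zero, or_assoc] using hprod

theorem eq_or_eq_of_lineAdj_tangent {a c : F}
    (h₁ : lineAdj (.inl (some a₁, b₁, c₁)) (.inl (none, a, c)))
    (h₁₁ : lineAdj (.inl (some a₁, b₁, c₁)) (.inl (some x₁, y₁, z₁)))
    (h₂ : lineAdj (.inl (some a₂, b₂, c₂)) (.inl (none, a, c)))
    (h₂₂ : lineAdj (.inl (some a₂, b₂, c₂)) (.inl (some x₂, y₂, z₂)))
    (h₃₁ : lineAdj (.inl (some a₃, b₃, c₃)) (.inl (some x₁, y₁, z₁)))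
    (h₃₂ : lineAdj (.inl (some a₃, b₃, c₃)) (.inl (some x₂, y₂, z₂))) :
    a₃ = a ∨ x₁ = x₂ := by
  obtain ⟨rfl, rfl⟩ := h₁
  obtain ⟨rfl, rfl⟩ := h₂
  simpa using eq_or_eq_of_secantForm_eq h₃₁ h₃₂
    ((secantForm_self h₁₁).trans (secantForm_self h₂₂).symm)

theorem eq_or_eq_of_lineAdj_affine_triangle
    (h₁₁ : lineAdj (.inl (some a₁, b₁, c₁)) (.inl (some x₁, y₁, z₁)))
    (h₁₂ : lineAdj (.inl (some a₁, b₁, c₁)) (.inl (some x₂, y₂, z₂)))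
    (h₂₂ : lineAdj (.inl (some a₂, b₂, c₂)) (.inl (some x₂, y₂, z₂)))
    (h₂₃ : lineAdj (.inl (some a₂, b₂, c₂)) (.inl (some x₃, y₃, z₃)))
    (h₃₃ : lineAdj (.inl (some a₃, b₃, c₃)) (.inl (some x₃, y₃, z₃)))
    (h₃₁ : lineAdj (.inl (some a₃, b₃, c₃)) (.inl (some x₁, y₁, z₁))) :
    a₂ = a₁ ∨ a₂ = a₃ ∨ x₂ = x₃ := by
  have hform₁₂ := secantForm_sub_secantForm a₁ a₃ h₁₁ h₁₂
  have hform₃₁ := secantForm_sub_secantForm a₁ a₃ h₃₃ h₃₁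
  simp only [sub_self, zero_mul, mul_zero, sub_eq_zero] at hform₁₂ hform₃₁
  exact eq_or_eq_of_secantForm_eq h₂₂ h₂₃ (hform₁₂.symm.trans hform₃₁.symm)

end Conic

section Incidence

variable {F : Type*} [Field F]

theorem eq_or_eq_of_lineAdj {l₁ l₂ p₁ p₂ : SGam F} (h₁₁ : lineAdj l₁ p₁) (h₁₂ : lineAdj l₁ p₂)
    (h₂₁ : lineAdj l₂ p₁) (h₂₂ : lineAdj l₂ p₂) : l₁ = l₂ ∨ p₁ = p₂ := by
  rcases l₁ with ⟨_ | a, b, c⟩ | _ | a <;> rcases p₁ with ⟨_ | x, y, z⟩ | _ | z <;>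
    simp only [lineAdj] at h₁₁ <;>
    rcases p₂ with ⟨_ | x', y', z'⟩ | _ | z' <;> simp only [lineAdj] at h₁₂ <;>
    rcases l₂ with ⟨_ | a', b', c'⟩ | _ | a' <;> simp only [lineAdj] at h₂₁ h₂₂
  case inl.some.inl.some.inl.some.inl.some =>
    have hdegenerate : a' = a ∨ a' = a ∨ x = x' := eq_or_eq_of_secantForm_eq h₂₁ h₂₂
      ((secantForm_self h₁₁).trans (secantForm_self h₁₂).symm)
    grind
  all_goals grind

theorem eq_of_lineAdj_triangle {l₁ l₂ l₃ p₁ p₂ p₃ : SGam F}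
    (h₁₁ : lineAdj l₁ p₁) (h₁₂ : lineAdj l₁ p₂) (h₂₂ : lineAdj l₂ p₂) (h₂₃ : lineAdj l₂ p₃)
    (h₃₃ : lineAdj l₃ p₃) (h₃₁ : lineAdj l₃ p₁) :
    l₁ = l₂ ∨ l₂ = l₃ ∨ l₃ = l₁ ∨ p₁ = p₂ ∨ p₂ = p₃ ∨ p₃ = p₁ := by
  rcases l₁ with ⟨_ | a, b, c⟩ | _ | a <;> rcases p₁ with ⟨_ | x, y, z⟩ | _ | z <;>
    simp only [lineAdj] at h₁₁ <;>
    rcases p₂ with ⟨_ | x', y', z'⟩ | _ | z' <;> simp only [lineAdj] at h₁₂ <;>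
    rcases l₂ with ⟨_ | a', b', c'⟩ | _ | a' <;> simp only [lineAdj] at h₂₂ <;>
    rcases p₃ with ⟨_ | x'', y'', z''⟩ | _ | z'' <;> simp only [lineAdj] at h₂₃ <;>
    rcases l₃ with ⟨_ | a'', b'', c''⟩ | _ | a'' <;> simp only [lineAdj] at h₃₃ h₃₁
  case inl.some.inl.none.inl.some.inl.some.inl.some.inl.some =>
    have := eq_or_eq_of_lineAdj_tangent h₁₁ h₁₂ h₃₁ h₃₃ h₂₂ h₂₃
    grind
  case inl.some.inl.some.inl.none.inl.some.inl.some.inl.some =>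
    have := eq_or_eq_of_lineAdj_tangent h₂₂ h₂₃ h₁₂ h₁₁ h₃₃ h₃₁
    grind
  case inl.some.inl.some.inl.some.inl.some.inl.none.inl.some =>
    have := eq_or_eq_of_lineAdj_tangent h₃₃ h₃₁ h₂₃ h₂₂ h₁₁ h₁₂
    grind
  case inl.some.inl.some.inl.some.inl.some.inl.some.inl.some =>
    have := eq_or_eq_of_lineAdj_affine_triangle h₁₁ h₁₂ h₂₂ h₂₃ h₃₃ h₃₁
    grind
  -- with a vertical line or an element at infinity, shared coordinates force an equality
  all_goals grind

end Incidence

namespace GammaQ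

section Adjacency

variable {F : Type*} [Field F] {p p' l l' : SGam F}

@[simp] theorem adj_inl_inr : (GammaQ F).Adj (.inl p) (.inr l) ↔ lineAdj l p := by
  simp [GammaQ]

@[simp] theorem adj_inr_inl : (GammaQ F).Adj (.inr l) (.inl p) ↔ lineAdj l p := by
  simp [GammaQ]

@[simp] theorem not_adj_inl_inl : ¬(GammaQ F).Adj (.inl p) (.inl p') := by
  simp [GammaQ]

@[simp] theorem not_adj_inr_inr : ¬(GammaQ F).Adj (.inr l) (.inr l') := by
  simp [GammaQ]

end Adjacency

variable {F : Type*} [Field F]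

theorem isBipartite (F : Type*) [Field F] : (GammaQ F).IsBipartite :=
  (SimpleGraph.Coloring.mk (α := Bool) Sum.isLeft
    (by rintro (_ | _) (_ | _) <;> simp)).colorable

theorem eq_or_eq_of_adj_quadrangle {v₀ v₁ v₂ v₃ : SGam F ⊕ SGam F}
    (h₀ : (GammaQ F).Adj v₀ v₁) (h₁ : (GammaQ F).Adj v₁ v₂) (h₂ : (GammaQ F).Adj v₂ v₃)
    (h₃ : (GammaQ F).Adj v₃ v₀) : v₀ = v₂ ∨ v₁ = v₃ := by
  rcases v₀ with _ | _ <;> rcases v₁ with _ | _ <;> rcases v₂ with _ | _ <;>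
    rcases v₃ with _ | _ <;>
    simp only [adj_inl_inr, adj_inr_inl, not_adj_inl_inl, not_adj_inr_inr] at h₀ h₁ h₂ h₃
  · have := eq_or_eq_of_lineAdj h₀ h₁ h₃ h₂
    grind
  · have := eq_or_eq_of_lineAdj h₀ h₃ h₁ h₂
    grind

theorem eq_of_adj_hexagon {v₀ v₁ v₂ v₃ v₄ v₅ : SGam F ⊕ SGam F}
    (h₀ : (GammaQ F).Adj v₀ v₁) (h₁ : (GammaQ F).Adj v₁ v₂) (h₂ : (GammaQ F).Adj v₂ v₃)
    (h₃ : (GammaQ F).Adj v₃ v₄) (h₄ : (GammaQ F).Adj v₄ v₅) (h₅ : (GammaQ F).Adj v₅ v₀) :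
    v₀ = v₂ ∨ v₁ = v₃ ∨ v₂ = v₄ ∨ v₃ = v₅ ∨ v₄ = v₀ ∨ v₅ = v₁ := by
  rcases v₀ with _ | _ <;> rcases v₁ with _ | _ <;> rcases v₂ with _ | _ <;>
    rcases v₃ with _ | _ <;> rcases v₄ with _ | _ <;> rcases v₅ with _ | _ <;>
    simp only [adj_inl_inr, adj_inr_inl, not_adj_inl_inl, not_adj_inr_inr] at h₀ h₁ h₂ h₃ h₄ h₅
  · have := eq_of_lineAdj_triangle h₀ h₁ h₂ h₃ h₄ h₅
    grind
  · have := eq_of_lineAdj_triangle h₅ h₀ h₁ h₂ h₃ h₄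
    grind

theorem free_cycleGraph_four (F : Type*) [Field F] :
    (SimpleGraph.cycleGraph 4).Free (GammaQ F) := by
  rintro ⟨f⟩
  have hadj (i : Fin 4) : (GammaQ F).Adj (f i) (f (i + 1)) :=
    f.toHom.map_adj (by revert i; decide)
  have hne (i : Fin 4) : f i ≠ f (i + 2) := f.injective.ne (by revert i; decide)
  exact (eq_or_eq_of_adj_quadrangle (hadj 0) (hadj 1) (hadj 2) (hadj 3)).elim (hne 0) (hne 1)

theorem free_cycleGraph_six (F : Type*) [Field F] :
    (SimpleGraph.cycleGraph 6).Free (GammaQ F) := by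
  rintro ⟨f⟩
  have hadj (i : Fin 6) : (GammaQ F).Adj (f i) (f (i + 1)) :=
    f.toHom.map_adj (by revert i; decide)
  have hne (i : Fin 6) : f i ≠ f (i + 2) := f.injective.ne (by revert i; decide)
  rcases eq_of_adj_hexagon (hadj 0) (hadj 1) (hadj 2) (hadj 3) (hadj 4) (hadj 5) with
    h | h | h | h | h | h
  exacts [hne 0 h, hne 1 h, hne 2 h, hne 3 h, hne 4 h, hne 5 h]

theorem eight_le_egirth (F : Type*) [Field F] : 8 ≤ (GammaQ F).egirth :=
  eight_le_egirth_of_isBipartite (isBipartite F) (free_cycleGraph_four F) (free_cycleGraph_six F)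

/-- The enumeration of the neighbours of a vertex of `Γ_q` by `F ∪ {q}`. -/
def neighbor : SGam F ⊕ SGam F → Option F → SGam F ⊕ SGam F
  | .inl (.inl (some x, y, z)), some a =>
      ln (some a) (y - a * x) (z - a ^ 2 * x - 2 * a * (y - a * x))
  | .inl (.inl (some x, y, _)), none => ln none y x
  | .inl (.inl (none, y, z)), some b => ln (some y) b z
  | .inl (.inl (none, y, _)), none => lnq (some y)
  | .inl (.inr (some z)), some b => ln none b z
  | .inl (.inr (some _)), none => lnq none
  | .inl (.inr none), a => lnq a
  | .inr (.inl (some a, b, c)), some x => pt (some x) (a * x + b) (a ^ 2 * x + 2 * a * b + c)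
  | .inr (.inl (some a, _, c)), none => pt none a c
  | .inr (.inl (none, b, c)), some z => pt (some c) b z
  | .inr (.inl (none, _, c)), none => ptq (some c)
  | .inr (.inr (some a)), some z => pt none a z
  | .inr (.inr (some _)), none => ptq none
  | .inr (.inr none), z => ptq z

theorem neighbor_injective (v : SGam F ⊕ SGam F) : (neighbor v).Injective := by
  rintro (_ | _) (_ | _) <;> rcases v with (⟨_ | _, _, _⟩ | _ | _) | (⟨_ | _, _, _⟩ | _ | _) <;>
    simp +contextual [neighbor, pt, ptq, ln, lnq]

theorem neighborSet_eq_range (v : SGam F ⊕ SGam F) :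
    (GammaQ F).neighborSet v = Set.range (neighbor v) := by
  ext w
  rw [SimpleGraph.mem_neighborSet, Set.mem_range, Option.exists]
  rcases v with (⟨_ | _, _, _⟩ | _ | _) | (⟨_ | _, _, _⟩ | _ | _) <;>
    rcases w with (⟨_ | _, _, _⟩ | _ | _) | (⟨_ | _, _, _⟩ | _ | _) <;>
    simp only [adj_inl_inr, adj_inr_inl, not_adj_inl_inl, not_adj_inr_inr, lineAdj, neighbor,
      pt, ptq, ln, lnq] <;>
    grind

theorem encard_neighborSet (v : SGam F ⊕ SGam F) :
    ((GammaQ F).neighborSet v).encard = ENat.card F + 1 := by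
  rw [neighborSet_eq_range, ← Set.image_univ, (neighbor_injective v).encard_image, Set.encard_univ,
    ENat.card_congr (Equiv.optionEquivSumPUnit.{0} F), ENat.card_sum]
  simp

end GammaQ

section Bset

variable {F : Type*} [Field F] {ξ : F} {a : Option F}

theorem inl_inl_mem_Bset {y z : F} :
    .inl (.inl (a, y, z)) ∈ Bset F ξ ↔ y = 0 ∨ a = none ∧ y = ξ := by
  cases a <;> simp [Bset, mem_ball_one, mem_ball_two, ln, lnq, lineAdj]

theorem inl_inr_mem_Bset : .inl (.inr a) ∈ Bset F ξ := by
  cases a <;> simp [Bset, mem_ball_one, mem_ball_two, ln, lnq, lineAdj]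

theorem inr_inl_mem_Bset {b c : F} :
    .inr (.inl (a, b, c)) ∈ Bset F ξ ↔ a = some ξ ∨ (a = none ∨ a = some 0) ∧ b = 0 := by
  have hline (a : F) : (∀ x, a * x + b = 0) ∧ 0 = a ↔ a = 0 ∧ b = 0 :=
    ⟨fun h => ⟨h.2.symm, by simpa using h.1 0⟩, by rintro ⟨rfl, rfl⟩; simp⟩
  cases a with
  | none =>
    simp [Bset, mem_ball_one, mem_ball_two, ln, lnq, lineAdj, Sum.exists, Prod.exists,
      Option.exists]
  | some a =>
    have hmem : .inr (.inl (some a, b, c)) ∈ Bset F ξ ↔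
        ((∀ x, a * x + b = 0) ∧ 0 = a) ∨ ξ = a := by
      simp [Bset, mem_ball_one, mem_ball_two, ln, lnq, lineAdj, Sum.exists, Prod.exists,
        Option.exists]
    rw [hmem, hline]
    grind

theorem inr_inr_mem_Bset : .inr (.inr a) ∈ Bset F ξ := by
  cases a <;> simp [Bset, mem_ball_one, mem_ball_two, ln, lnq, lineAdj, Sum.exists, Prod.exists,
    Option.exists]

theorem exists_forall_neighbor_mem_Bset_iff {v : SGam F ⊕ SGam F} (hv : v ∉ Bset F ξ) :
    ∃ t₀, ∀ t, GammaQ.neighbor v t ∈ Bset F ξ ↔ t = t₀ := by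
  classical
  rcases v with (⟨_ | x, y, z⟩ | _) | (⟨_ | a, b, c⟩ | _) <;>
    simp only [inl_inl_mem_Bset, inr_inl_mem_Bset, inl_inr_mem_Bset, inr_inr_mem_Bset, not_true]
      at hv
  · refine ⟨none, ?_⟩
    rintro (_ | b)
    · simp only [GammaQ.neighbor, lnq, inr_inr_mem_Bset]
    · simp only [GammaQ.neighbor, ln, inr_inl_mem_Bset]
      grind
  · refine ⟨some ξ, ?_⟩
    rintro (_ | a) <;> simp only [GammaQ.neighbor, ln, inr_inl_mem_Bset] <;> grind
  · refine ⟨none, ?_⟩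
    rintro (_ | z)
    · simp only [GammaQ.neighbor, ptq, inl_inr_mem_Bset]
    · simp only [GammaQ.neighbor, pt, inl_inl_mem_Bset]
      grind
  · refine ⟨if a = 0 then none else some (-b / a), ?_⟩
    rintro (_ | x) <;> simp only [GammaQ.neighbor, pt, inl_inl_mem_Bset] <;> grind

theorem isPerfectDominatingSet_Bset (ξ : F) : IsPerfectDominatingSet (GammaQ F) (Bset F ξ) := by
  intro v hv
  obtain ⟨t₀, ht₀⟩ := exists_forall_neighbor_mem_Bset_iff hv
  rw [GammaQ.neighborSet_eq_range, Set.encard_eq_one]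
  refine ⟨GammaQ.neighbor v t₀, ?_⟩
  grind

theorem encard_neighborSet_induce_compl_Bset (v : ↥(Bset F ξ)ᶜ) :
    (((GammaQ F).induce (Bset F ξ)ᶜ).neighborSet v).encard = ENat.card F := by
  have h := (isPerfectDominatingSet_Bset ξ).encard_neighborSet_induce_compl_add_one v
  rw [GammaQ.encard_neighborSet] at h
  exact WithTop.add_right_cancel ENat.one_ne_top h

theorem egirth_induce_compl_Bset_le (hξ : ξ ≠ 0) :
    ((GammaQ F).induce (Bset F ξ)ᶜ).egirth ≤ 8 := by
  let p (x z : F) : ↥(Bset F ξ)ᶜ := ⟨.inl (.inl (some x, 1, z)), by simp [inl_inl_mem_Bset]⟩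
  let l (c : F) : ↥(Bset F ξ)ᶜ :=
    ⟨.inr (.inl (some 0, 1, c)), by simp [inr_inl_mem_Bset, hξ.symm]⟩
  let m (c : F) : ↥(Bset F ξ)ᶜ := ⟨.inr (.inl (none, 1, c)), by simp [inr_inl_mem_Bset]⟩
  have hpl (x z) : ((GammaQ F).induce (Bset F ξ)ᶜ).Adj (p x z) (l z) := by simp [p, l, lineAdj]
  have hpm (x z) : ((GammaQ F).induce (Bset F ξ)ᶜ).Adj (p x z) (m x) := by simp [p, m, lineAdj]
  let w : ((GammaQ F).induce (Bset F ξ)ᶜ).Walk (p 0 0) (p 0 0) :=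
    .cons (hpl 0 0) <| .cons (hpl 1 0).symm <| .cons (hpm 1 0) <| .cons (hpm 1 1).symm <|
    .cons (hpl 1 1) <| .cons (hpl 0 1).symm <| .cons (hpm 0 1) <| .cons (hpm 0 0).symm .nil
  have hw : w.IsCycle := by simp [w, p, l, m, SimpleGraph.Walk.cons_isCycle_iff]
  exact SimpleGraph.egirth_le_length hw

theorem egirth_induce_compl_Bset (hξ : ξ ≠ 0) :
    ((GammaQ F).induce (Bset F ξ)ᶜ).egirth = 8 :=
  (egirth_induce_compl_Bset_le hξ).antisymm
    ((GammaQ.eight_le_egirth F).trans (egirth_le_egirth_induce _ _))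

theorem compl_Bset (ξ : F) :
    (Bset F ξ)ᶜ =
      .inl '' (.inl '' ((.univ ×ˢ {0}ᶜ ×ˢ .univ) \ ({none} ×ˢ {ξ} ×ˢ .univ))) ∪
      .inr '' (.inl '' (({some ξ}ᶜ ×ˢ .univ) \ ({none, some 0} ×ˢ {0} ×ˢ .univ))) := by
  ext ((⟨_, _, _⟩ | _) | (⟨_, _, _⟩ | _)) <;>
    simp [inl_inl_mem_Bset, inr_inl_mem_Bset, inl_inr_mem_Bset, inr_inr_mem_Bset, not_or]

theorem ncard_points_compl_Bset [Fintype F] (hξ : ξ ≠ 0) :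
    ((.univ ×ˢ {0}ᶜ ×ˢ .univ) \ ({none} ×ˢ {ξ} ×ˢ .univ) : Set (Option F × F × F)).ncard =
      Fintype.card F * (Fintype.card F ^ 2 - 2) := by
  have hsub : ({none} ×ˢ {ξ} ×ˢ .univ : Set (Option F × F × F)) ⊆ .univ ×ˢ {0}ᶜ ×ˢ .univ := by
    gcongr <;> simp [hξ.symm]
  have hcompl : ({0}ᶜ : Set F).ncard = Fintype.card F - 1 := by
    rw [Set.ncard_compl, Set.ncard_singleton, Nat.card_eq_fintype_card]
  rw [Set.ncard_sdiff hsub]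
  simp only [Set.ncard_prod, hcompl, Set.ncard_univ, Nat.card_eq_fintype_card,
    Set.ncard_singleton, Fintype.card_option, one_mul]
  calc (Fintype.card F + 1) * ((Fintype.card F - 1) * Fintype.card F) - Fintype.card F
    _ = (Fintype.card F ^ 2 - 1 ^ 2) * Fintype.card F - 1 * Fintype.card F := by
      rw [Nat.sq_sub_sq, mul_assoc, one_mul]
    _ = Fintype.card F * (Fintype.card F ^ 2 - 2) := by
      rw [← Nat.sub_mul, one_pow, Nat.sub_sub, mul_comm]

theorem ncard_lines_compl_Bset [Fintype F] (hξ : ξ ≠ 0) :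
    (({some ξ}ᶜ ×ˢ .univ) \ ({none, some 0} ×ˢ {0} ×ˢ .univ) : Set (Option F × F × F)).ncard =
      Fintype.card F * (Fintype.card F ^ 2 - 2) := by
  have hsub : ({none, some 0} ×ˢ {0} ×ˢ .univ : Set (Option F × F × F)) ⊆
      {some ξ}ᶜ ×ˢ .univ := by
    gcongr <;> simp [hξ]
  have hcompl : ({some ξ}ᶜ : Set (Option F)).ncard = Fintype.card F := by
    rw [Set.ncard_compl, Set.ncard_singleton, Nat.card_eq_fintype_card, Fintype.card_option,
      Nat.add_sub_cancel]
  rw [Set.ncard_sdiff hsub]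
  simp only [Set.ncard_prod, hcompl, Set.ncard_univ, Fintype.card_prod, Nat.card_eq_fintype_card,
    Set.ncard_singleton, Set.ncard_pair (Option.some_ne_none (0 : F)).symm, one_mul]
  rw [Nat.mul_sub, sq, mul_comm 2]

theorem ncard_compl_Bset [Fintype F] (hξ : ξ ≠ 0) :
    ((Bset F ξ)ᶜ).ncard = 2 * Fintype.card F * (Fintype.card F ^ 2 - 2) := by
  rw [compl_Bset, Set.ncard_union_eq (by simp [Set.disjoint_left]),
    Set.ncard_image_of_injective _ Sum.inl_injective,
    Set.ncard_image_of_injective _ Sum.inl_injective,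
    Set.ncard_image_of_injective _ Sum.inr_injective,
    Set.ncard_image_of_injective _ Sum.inl_injective,
    ncard_points_compl_Bset hξ, ncard_lines_compl_Bset hξ]
  ring

theorem encard_compl_Bset (hξ : ξ ≠ 0) :
    (Bset F ξ)ᶜ.encard = 2 * ENat.card F * (ENat.card F ^ 2 - 2) := by
  cases fintypeOrInfinite F
  · rw [← Set.Finite.cast_ncard_eq (Set.toFinite _), ncard_compl_Bset hξ,
      ENat.card_eq_coe_fintype_card]
    norm_cast
  · have hinfinite : (Bset F ξ)ᶜ.Infinite :=
      Set.infinite_of_injective_forall_mem (f := fun x => .inl (.inl (some x, 1, 0)))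
        (fun _ _ h => by simpa using h) (by simp [inl_inl_mem_Bset])
    simp [hinfinite.encard_eq]

end Bset

theorem stmt15_general {F : Type*} [Field F] (ξ : F) (hξ : ξ ≠ 0) :
    (∀ (V : Type*) (G : SimpleGraph V) (s : Set V), G.egirth ≤ (G.induce s).egirth) ∧
    (∀ v : ↥(Bset F ξ)ᶜ,
        (((GammaQ F).induce (Bset F ξ)ᶜ).neighborSet v).encard = ENat.card F) ∧
    ((GammaQ F).induce (Bset F ξ)ᶜ).egirth = 8 ∧
    (Bset F ξ)ᶜ.encard = 2 * ENat.card F * (ENat.card F ^ 2 - 2) :=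
  ⟨fun _ => egirth_le_egirth_induce, encard_neighborSet_induce_compl_Bset,
    egirth_induce_compl_Bset hξ, encard_compl_Bset hξ⟩

/-- (1) If `U` is a perfect dominating set of a `(q+1)`-regular graph `G` of girth 8
such that `G − U` is `q`-regular, then `G − U` has girth at least 8.
(2) In particular, removing the perfect dominating set `B` from `Γ_q` yields a
`q`-regular graph of girth 8 on `2q(q²−2)` vertices. -/
theorem stmt15 {F : Type*} [Field F] [Fintype F] (ξ : F) (hξ : ξ ≠ 0) :
    (∀ (V : Type) (_ : Fintype V) (G : SimpleGraph V) (q : ℕ) (U : Set V),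
        (∀ x ∉ U, (G.neighborSet x ∩ U).ncard = 1) →
        G.egirth = 8 →
        (∀ v : V, (G.neighborSet v).ncard = q + 1) →
        (∀ v : ↥Uᶜ, ((G.induce Uᶜ).neighborSet v).ncard = q) →
        8 ≤ (G.induce Uᶜ).egirth) ∧
    (∀ v : ↥(Bset F ξ)ᶜ,
        (((GammaQ F).induce (Bset F ξ)ᶜ).neighborSet v).ncard = Fintype.card F) ∧
    ((GammaQ F).induce (Bset F ξ)ᶜ).egirth = 8 ∧
    ((Bset F ξ)ᶜ : Set (SGam F ⊕ SGam F)).ncard =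
      2 * Fintype.card F * (Fintype.card F ^ 2 - 2) := by
  obtain ⟨hgirth, hdegree, hcycle, hcard⟩ := stmt15_general ξ hξ
  exact ⟨fun V _ G _ U _ hG _ _ => hG ▸ hgirth V G Uᶜ, fun v => by simp [Set.ncard, hdegree],
    hcycle, by
      rw [Set.ncard, hcard, ENat.card_eq_coe_fintype_card]
      norm_cast⟩
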